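/- Let X be a real Banach space in which every weakly compact convex set is admissible (i.e., is the intersection of all closed balls containing it). Then every nonempty weakly compact convex set in X is the norm-closed convex hull of its set of farthest points. -/

import Mathlib

open Metric Set Pointwise

/-- The farthest distance map `r_K(x) = sup {‖z - x‖ : z ∈ K}`. -/
noncomputable def rFar {X : Type*} [NormedAddCommGroup X] (K : Set X) (x : X) : ℝ :=
  sSup ((fun z => ‖z - x‖) '' K)

/-- `Q_K(x)`: the set of points of `K` farthest from `x`. -/
def QFar {X : Type*} [NormedAddCommGroup X] (K : Set X) (x : X) : Set X :=
  {z ∈ K | ‖z - x‖ = rFar K x}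

/-- `D(K)`: the set of points admitting a farthest point in `K`. -/
def DFar {X : Type*} [NormedAddCommGroup X] (K : Set X) : Set X :=
  {x | (QFar K x).Nonempty}

/-- `b(K)`: the set of farthest points of `K`. -/
def farPoints {X : Type*} [NormedAddCommGroup X] (K : Set X) : Set X :=
  ⋃ x ∈ DFar K, QFar K x

/-- The crescent `C(K, x, α) = {z ∈ K : ‖z - x‖ > r_K(x) - α}`. -/
def crescent {X : Type*} [NormedAddCommGroup X] (K : Set X) (x : X) (α : ℝ) : Set X :=
  {z ∈ K | rFar K x - α < ‖z - x‖}

/-- Property (R): every crescent of `K` contains a farthest point of `K`. -/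
def PropR {X : Type*} [NormedAddCommGroup X] (K : Set X) : Prop :=
  ∀ (x : X) (α : ℝ), 0 < α → ∃ z ∈ crescent K x α, z ∈ farPoints K

/-- A set is admissible if it is the intersection of all closed balls containing it. -/
def Admissible {X : Type*} [NormedAddCommGroup X] (K : Set X) : Prop :=
  K = ⋂ p ∈ {p : X × ℝ | K ⊆ closedBall p.1 p.2}, closedBall p.1 p.2

/-- The weak topology `σ(X, X*)` on `X`. -/
def weakTop (X : Type*) [NormedAddCommGroup X] [NormedSpace ℝ X] : TopologicalSpace X :=
  TopologicalSpace.induced (fun x => fun f : X →L[ℝ] ℝ => f x) inferInstance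


/-!
For a bounded set `K` the function `r_K` is convex and 1-Lipschitz, hence has a subgradient of norm
at most one at every point. If every functional attains its minimum on `K`, then `D(K)` is dense
(Lau): off a meagre set of points `y`, every subgradient `f` at `y` satisfies
`sup {f (y - z) : z ∈ K} ≥ r_K(y)`, and a minimizer `z` of `f` on `K` is then a point of `K`
farthest from `y`. Consequently a closed ball containing `b(K)` contains `K`: this holds up to an
arbitrarily small error after moving the centre into `D(K)`. An admissible set containing `b(K)`
therefore contains `K`, and this applies to the closed convex hull of `b(K)`.
-/

/-- `f` is a subgradient of `φ` at `x`: the affine function `y ↦ φ x + f (y - x)` minorizes `φ`. -/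
def IsSubgradientAt {E : Type*} [AddCommGroup E] [Module ℝ E] [TopologicalSpace E]
    (φ : E → ℝ) (f : E →L[ℝ] ℝ) (x : E) : Prop :=
  ∀ y, φ x + f (y - x) ≤ φ y

section Subgradient

theorem exists_isSubgradientAt_of_convexOn {E : Type*} [AddCommGroup E] [Module ℝ E]
    [TopologicalSpace E] [IsTopologicalAddGroup E] [ContinuousSMul ℝ E] {φ : E → ℝ}
    (hconv : ConvexOn ℝ univ φ) (hcont : Continuous φ) (x : E) :
    ∃ f, IsSubgradientAt φ f x := by
  have hopen : IsOpen {p : E × ℝ | p.1 ∈ univ ∧ φ p.1 < p.2} := by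
    simp only [mem_univ, true_and]
    exact isOpen_lt (by fun_prop) continuous_snd
  obtain ⟨F, hF⟩ := geometric_hahn_banach_open_point hconv.convex_strict_epigraph hopen
    (x := (x, φ x)) (by simp)
  set g := F.comp (ContinuousLinearMap.inl ℝ E ℝ)
  set c := F (0, 1)
  have F_apply (y : E) (t : ℝ) : F (y, t) = g y + t * c := by
    have decomposition : (y, t) = (y, 0) + t • ((0, 1) : E × ℝ) := by simp
    rw [decomposition, map_add, map_smul]
    rfl
  have separation {y : E} {t : ℝ} (ht : φ y < t) : g y + t * c < g x + φ x * c := by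
    simpa only [F_apply] using hF (y, t) ⟨mem_univ y, ht⟩
  have hc : 0 < -c := by linarith [separation (lt_add_one (φ x))]
  refine ⟨(-c)⁻¹ • g, fun y => le_of_forall_gt_imp_ge_of_dense fun t ht => ?_⟩
  have slope_le : g (y - x) / -c ≤ t - φ x := by
    rw [div_le_iff₀ hc, map_sub]
    linarith [separation ht]
  rw [smul_apply, smul_eq_mul, inv_mul_eq_div]
  linarith

theorem IsSubgradientAt.le_mul_norm {E : Type*} [SeminormedAddCommGroup E] [NormedSpace ℝ E]
    {φ : E → ℝ} {f : E →L[ℝ] ℝ} {x : E} {C : NNReal} (hf : IsSubgradientAt φ f x)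
    (hφ : LipschitzWith C φ) (v : E) : f v ≤ C * ‖v‖ := by
  have hsub := hf (x + v)
  have hlip := hφ.le_add_mul (x + v) x
  rw [add_sub_cancel_left] at hsub
  rw [dist_self_add_left] at hlip
  linarith

end Subgradient

section FarthestDistance

variable {X : Type*} [NormedAddCommGroup X] {K : Set X}

theorem norm_sub_le_rFar (hK : Bornology.IsBounded K) (x : X) {z : X} (hz : z ∈ K) :
    ‖z - x‖ ≤ rFar K x := by
  obtain ⟨R, hR⟩ := hK.subset_closedBall x
  refine le_csSup ⟨R, ?_⟩ (mem_image_of_mem _ hz)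
  rintro _ ⟨w, hw, rfl⟩
  exact mem_closedBall_iff_norm.mp (hR hw)

theorem rFar_le (hne : K.Nonempty) {x : X} {c : ℝ} (hc : ∀ z ∈ K, ‖z - x‖ ≤ c) :
    rFar K x ≤ c :=
  csSup_le (hne.image _) (forall_mem_image.mpr hc)

theorem exists_lt_norm_sub_of_lt_rFar (hne : K.Nonempty) {x : X} {c : ℝ} (hc : c < rFar K x) :
    ∃ z ∈ K, c < ‖z - x‖ := by
  contrapose! hc
  exact rFar_le hne hc

theorem lipschitzWith_rFar (hne : K.Nonempty) (hK : Bornology.IsBounded K) :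
    LipschitzWith 1 (rFar K) := by
  refine LipschitzWith.of_le_add fun x y => rFar_le hne fun z hz => ?_
  rw [dist_comm, dist_eq_norm]
  linarith [norm_sub_le_rFar hK y hz, norm_sub_le_norm_sub_add_norm_sub z y x]

theorem convexOn_rFar [NormedSpace ℝ X] (hne : K.Nonempty) (hK : Bornology.IsBounded K) :
    ConvexOn ℝ univ (rFar K) := by
  refine ⟨convex_univ, fun u _ v _ a b ha hb hab => rFar_le hne fun z hz => ?_⟩
  calc ‖z - (a • u + b • v)‖ = dist (a • u + b • v) z := by rw [dist_comm, dist_eq_norm]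
    _ ≤ a • dist u z + b • dist v z :=
      (convexOn_univ_dist z).2 (mem_univ u) (mem_univ v) ha hb hab
    _ = a • ‖z - u‖ + b • ‖z - v‖ := by simp only [dist_comm _ z, dist_eq_norm]
    _ ≤ a • rFar K u + b • rFar K v := by
      gcongr
      exacts [norm_sub_le_rFar hK u hz, norm_sub_le_rFar hK v hz]

theorem QFar_subset_farPoints (K : Set X) (x : X) : QFar K x ⊆ farPoints K :=
  fun z hz => mem_iUnion₂.mpr ⟨x, ⟨z, hz⟩, hz⟩

theorem farPoints_subset (K : Set X) : farPoints K ⊆ K :=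
  iUnion₂_subset fun _ _ _ hz => hz.1

theorem subset_closedBall_of_farPoints_subset (hK : Bornology.IsBounded K)
    (hdense : Dense (DFar K)) {x : X} {r : ℝ} (hr : farPoints K ⊆ closedBall x r) :
    K ⊆ closedBall x r := by
  rcases K.eq_empty_or_nonempty with rfl | hne
  · exact empty_subset _
  have hclosed : IsClosed {y | rFar K y ≤ r + dist y x} :=
    isClosed_le (lipschitzWith_rFar hne hK).continuous (by fun_prop)
  have hDFar : DFar K ⊆ {y | rFar K y ≤ r + dist y x} := by
    rintro y ⟨w, hw⟩
    have hwr := mem_closedBall.mp (hr (QFar_subset_farPoints K y hw))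
    rw [mem_ofPred_eq, ← hw.2, ← dist_eq_norm]
    linarith [dist_triangle_right w y x]
  have hx : rFar K x ≤ r + dist x x := hclosed.closure_subset_iff.mpr hDFar (hdense x)
  rw [dist_self, add_zero] at hx
  exact fun z hz => mem_closedBall_iff_norm.mpr ((norm_sub_le_rFar hK x hz).trans hx)

theorem subset_of_farPoints_subset_of_admissible (hK : Bornology.IsBounded K)
    (hdense : Dense (DFar K)) {C : Set X} (hC : Admissible C) (hsub : farPoints K ⊆ C) :
    K ⊆ C := by
  rw [hC]
  exact subset_iInter₂ fun p hp => subset_closedBall_of_farPoints_subset hK hdense (hsub.trans hp)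

end FarthestDistance

section Density

variable {X : Type*} [NormedAddCommGroup X] [NormedSpace ℝ X] {K : Set X}

/-- The points `y` at which every subgradient `f` of `r_K` satisfies
`sup {f (y - z) : z ∈ K} > r_K(y) - κ`; these are the dense open conditions (up to taking
interiors) of the category argument for the density of `D(K)`. -/
def nearlyAttainedSet (K : Set X) (κ : ℝ) : Set X :=
  {y | ∀ f, IsSubgradientAt (rFar K) f y → ∃ z ∈ K, rFar K y - κ < f (y - z)}

/-- Moving from `x` away from an almost farthest point `z` increases `r_K` almost at unit rate, and
this forces the subgradients at the new point to be almost norming for `y - z`. -/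
theorem IsSubgradientAt.mul_rFar_le (hK : Bornology.IsBounded K) {f : X →L[ℝ] ℝ} {x y z : X}
    (hf : IsSubgradientAt (rFar K) f y) (hz : z ∈ K) {l ε : ℝ} (hl : 0 ≤ l)
    (hzx : rFar K x - ε ≤ ‖z - x‖) (hy : ‖y - (x + l • (x - z))‖ ≤ ε) :
    l * rFar K y ≤ l * f (y - z) + (3 + l) * ε := by
  set e := y - (x + l • (x - z))
  have functional_le : f e ≤ ε := by
    simpa using (hf.le_mul_norm (lipschitzWith_rFar ⟨z, hz⟩ hK) e).trans (by simpa using hy)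
  have rFar_ge : (1 + l) * (rFar K x - ε) - ε ≤ rFar K y :=
    calc (1 + l) * (rFar K x - ε) - ε ≤ (1 + l) * ‖z - x‖ - ‖e‖ := by gcongr
      _ = ‖(1 + l) • (z - x)‖ - ‖e‖ := by rw [norm_smul_of_nonneg (by positivity)]
      _ ≤ ‖(1 + l) • (z - x) - e‖ := norm_sub_norm_le _ _
      _ = ‖z - y‖ := by congr 1; simp only [e]; module
      _ ≤ rFar K y := norm_sub_le_rFar hK y hz
  have subgradient_le : (1 + l) * (rFar K y + f (x - y)) ≤ (1 + l) * rFar K x := by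
    gcongr
    exact hf x
  have collinear : (1 + l) * f (x - y) = -(f e + l * f (y - z)) := by
    simp only [← smul_eq_mul, ← map_smul, ← map_add, ← map_neg]
    congr 1; simp only [e]; module
  linarith

theorem nearlyAttainedSet_mono (K : Set X) : Monotone (nearlyAttainedSet K) := by
  intro κ κ' hκ y hy f hf
  obtain ⟨z, hz, hfz⟩ := hy f hf
  exact ⟨z, hz, by linarith⟩

theorem dense_interior_nearlyAttainedSet (hne : K.Nonempty) (hK : Bornology.IsBounded K) {κ : ℝ}
    (hκ : 0 < κ) : Dense (interior (nearlyAttainedSet K κ)) := by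
  refine Metric.dense_iff.mpr fun x ρ hρ => ?_
  obtain ⟨l, hl, hlρ⟩ := exists_pos_mul_lt hρ (rFar K x)
  obtain ⟨ε, hε, hεκ⟩ := exists_pos_mul_lt (mul_pos hl hκ) (3 + l)
  obtain ⟨z, hz, hzx⟩ := exists_lt_norm_sub_of_lt_rFar hne (sub_lt_self (rFar K x) hε)
  set x' := x + l • (x - z)
  have mem_ball_x : x' ∈ ball x ρ := by
    rw [mem_ball, dist_self_add_left, norm_smul_of_nonneg hl.le, norm_sub_rev, mul_comm]
    exact (mul_le_mul_of_nonneg_right (norm_sub_le_rFar hK x hz) hl.le).trans_lt hlρ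
  have ball_subset : ball x' ε ⊆ nearlyAttainedSet K κ := by
    intro y hy f hf
    have hgap := hf.mul_rFar_le hK hz hl.le hzx.le (mem_ball_iff_norm.mp hy).le
    exact ⟨z, hz, lt_of_mul_lt_mul_left (by linarith) hl.le⟩
  exact ⟨x', mem_ball_x, mem_interior.mpr ⟨_, ball_subset, isOpen_ball, mem_ball_self hε⟩⟩

theorem mem_DFar_of_forall_mem_nearlyAttainedSet (hK : Bornology.IsBounded K)
    (hmin : ∀ f : X →L[ℝ] ℝ, ∃ z ∈ K, IsMinOn f K z) {y : X}
    (hy : ∀ κ > 0, y ∈ nearlyAttainedSet K κ) : y ∈ DFar K := by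
  have hne : K.Nonempty := (hmin 0).imp fun _ => And.left
  have hlip := lipschitzWith_rFar hne hK
  obtain ⟨f, hf⟩ := exists_isSubgradientAt_of_convexOn (convexOn_rFar hne hK) hlip.continuous y
  obtain ⟨z, hz, hfz⟩ := hmin f
  refine ⟨z, hz, le_antisymm (norm_sub_le_rFar hK y hz) ?_⟩
  have rFar_le_apply : rFar K y ≤ f (y - z) := by
    refine le_of_forall_sub_le fun κ hκ => ?_
    obtain ⟨w, hw, hfw⟩ := hy κ hκ f hf
    have hzw : f z ≤ f w := hfz hw
    rw [map_sub] at hfw ⊢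
    linarith
  calc rFar K y ≤ f (y - z) := rFar_le_apply
    _ ≤ ‖y - z‖ := by simpa using hf.le_mul_norm hlip (y - z)
    _ = ‖z - y‖ := norm_sub_rev y z

theorem dense_DFar_of_forall_exists_isMinOn [CompleteSpace X] (hK : Bornology.IsBounded K)
    (hmin : ∀ f : X →L[ℝ] ℝ, ∃ z ∈ K, IsMinOn f K z) : Dense (DFar K) := by
  have hne : K.Nonempty := (hmin 0).imp fun _ => And.left
  have dense_iInter : Dense (⋂ n : ℕ, interior (nearlyAttainedSet K (1 / (n + 1)))) :=
    dense_iInter_of_isOpen_nat (fun _ => isOpen_interior)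
      fun _ => dense_interior_nearlyAttainedSet hne hK (by positivity)
  refine dense_iInter.mono fun y hy =>
    mem_DFar_of_forall_mem_nearlyAttainedSet hK hmin fun κ hκ => ?_
  obtain ⟨n, hn⟩ := exists_nat_one_div_lt hκ
  exact nearlyAttainedSet_mono K hn.le (interior_subset (mem_iInter.mp hy n))

end Density

section WeakCompactness

theorem isBounded_of_forall_isBounded_image {𝕜 E : Type*} [RCLike 𝕜] [SeminormedAddCommGroup E]
    [NormedSpace 𝕜 E] {K : Set E} (hK : ∀ f : StrongDual 𝕜 E, Bornology.IsBounded (f '' K)) :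
    Bornology.IsBounded K := by
  let J := NormedSpace.inclusionInDoubleDualLi 𝕜 (E := E)
  have pointwise_bounded (f : StrongDual 𝕜 E) : ∃ C, ∀ z : K, ‖J z f‖ ≤ C := by
    obtain ⟨C, hC⟩ := (hK f).exists_norm_le
    exact ⟨C, fun z => hC _ (mem_image_of_mem f z.2)⟩
  obtain ⟨C, hC⟩ := banach_steinhaus pointwise_bounded
  exact isBounded_iff_forall_norm_le.mpr ⟨C, fun z hz => (J.norm_map z).symm.trans_le (hC ⟨z, hz⟩)⟩

theorem isCompact_image_of_isCompact_toWeakSpace_image {𝕜 E : Type*} [CommSemiring 𝕜]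
    [TopologicalSpace 𝕜] [ContinuousAdd 𝕜] [ContinuousConstSMul 𝕜 𝕜] [AddCommMonoid E] [Module 𝕜 E]
    [TopologicalSpace E] {K : Set E} (hK : IsCompact (toWeakSpace 𝕜 E '' K))
    (f : StrongDual 𝕜 E) : IsCompact (f '' K) := by
  have hcont : Continuous (f ∘ (toWeakSpace 𝕜 E).symm) :=
    WeakBilin.eval_continuous (topDualPairing 𝕜 E).flip f
  simpa only [image_image, Function.comp_apply, LinearEquiv.symm_apply_apply] using hK.image hcont

theorem isClosed_of_isCompact_toWeakSpace_image {𝕜 E : Type*} [CommSemiring 𝕜]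
    [TopologicalSpace 𝕜] [ContinuousAdd 𝕜] [ContinuousConstSMul 𝕜 𝕜] [AddCommMonoid E] [Module 𝕜 E]
    [TopologicalSpace E] [T2Space (WeakSpace 𝕜 E)] {K : Set E}
    (hK : IsCompact (toWeakSpace 𝕜 E '' K)) : IsClosed K := by
  have hcont : Continuous (toWeakSpace 𝕜 E) := (toWeakSpaceCLM 𝕜 E).continuous
  simpa only [(toWeakSpace 𝕜 E).injective.preimage_image] using hK.isClosed.preimage hcont

theorem isCompact_toWeakSpace_image_of_subset {𝕜 E : Type*} [RCLike 𝕜] [AddCommGroup E]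
    [Module 𝕜 E] [Module ℝ E] [IsScalarTower ℝ 𝕜 E] [TopologicalSpace E] [IsTopologicalAddGroup E]
    [ContinuousSMul 𝕜 E] [LocallyConvexSpace ℝ E] {C K : Set E}
    (hK : IsCompact (toWeakSpace 𝕜 E '' K)) (hconv : Convex ℝ C) (hclosed : IsClosed C)
    (hsub : C ⊆ K) : IsCompact (toWeakSpace 𝕜 E '' C) := by
  refine hK.of_isClosed_subset ?_ (image_mono hsub)
  rw [← hclosed.closure_eq, hconv.toWeakSpace_closure 𝕜]
  exact isClosed_closure

end WeakCompactness

section WeakTop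

variable {X : Type*} [NormedAddCommGroup X] [NormedSpace ℝ X] {K : Set X}

theorem isCompact_weakTop_iff :
    @IsCompact X (weakTop X) K ↔ IsCompact (toWeakSpace ℝ X '' K) :=
  (iff_of_eq (congrArg (@IsCompact X (weakTop X)) (image_id K))).symm

theorem isClosed_of_isCompact_weakTop (hK : @IsCompact X (weakTop X) K) : IsClosed K :=
  isClosed_of_isCompact_toWeakSpace_image (isCompact_weakTop_iff.mp hK)

theorem isBounded_of_isCompact_weakTop (hK : @IsCompact X (weakTop X) K) : Bornology.IsBounded K :=
  isBounded_of_forall_isBounded_image fun f =>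
    (isCompact_image_of_isCompact_toWeakSpace_image (isCompact_weakTop_iff.mp hK) f).isBounded

theorem exists_isMinOn_of_isCompact_weakTop (hK : @IsCompact X (weakTop X) K) (hne : K.Nonempty)
    (f : X →L[ℝ] ℝ) : ∃ z ∈ K, IsMinOn f K z := by
  have hfK := isCompact_image_of_isCompact_toWeakSpace_image (isCompact_weakTop_iff.mp hK) f
  obtain ⟨_, ⟨z, hz, rfl⟩, hmin⟩ := hfK.exists_isLeast (hne.image f)
  exact ⟨z, hz, fun w hw => hmin (mem_image_of_mem f hw)⟩

theorem dense_DFar_of_isCompact_weakTop [CompleteSpace X] (hK : @IsCompact X (weakTop X) K)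
    (hne : K.Nonempty) : Dense (DFar K) :=
  dense_DFar_of_forall_exists_isMinOn (isBounded_of_isCompact_weakTop hK)
    (exists_isMinOn_of_isCompact_weakTop hK hne)

theorem isCompact_weakTop_closure_convexHull_farPoints (hK : @IsCompact X (weakTop X) K)
    (hconv : Convex ℝ K) : @IsCompact X (weakTop X) (closure (convexHull ℝ (farPoints K))) :=
  isCompact_weakTop_iff.mpr <| isCompact_toWeakSpace_image_of_subset
    (isCompact_weakTop_iff.mp hK) (convex_convexHull ℝ _).closure isClosed_closure
    (closure_minimal (convexHull_min (farPoints_subset K) hconv) (isClosed_of_isCompact_weakTop hK))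

theorem stmt_17_general [CompleteSpace X] (hK : @IsCompact X (weakTop X) K) (hne : K.Nonempty)
    (hadm : Admissible (closure (convexHull ℝ (farPoints K)))) :
    closure (convexHull ℝ K) = closure (convexHull ℝ (farPoints K)) := by
  have hsub : K ⊆ closure (convexHull ℝ (farPoints K)) :=
    subset_of_farPoints_subset_of_admissible (isBounded_of_isCompact_weakTop hK)
      (dense_DFar_of_isCompact_weakTop hK hne) hadm
      ((subset_convexHull ℝ _).trans subset_closure)
  exact Subset.antisymm
    (closure_minimal (convexHull_min hsub (convex_convexHull ℝ _).closure) isClosed_closure)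
    (closure_mono (convexHull_mono (farPoints_subset K)))

end WeakTop

/-- If every weakly compact convex set in `X` is admissible, then every nonempty weakly
compact convex set is the closed convex hull of its farthest points. -/
theorem stmt_17 {X : Type*} [NormedAddCommGroup X] [NormedSpace ℝ X] [CompleteSpace X]
    (h : ∀ K : Set X, @IsCompact X (weakTop X) K → Convex ℝ K → Admissible K) :
    ∀ K : Set X, @IsCompact X (weakTop X) K → Convex ℝ K → K.Nonempty →
      K = closure (convexHull ℝ (farPoints K)) := by
  intro K hK hconv hne
  rw [← stmt_17_general hK hne (h _ (isCompact_weakTop_closure_convexHull_farPoints hK hconv)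
    (convex_convexHull ℝ _).closure), hconv.convexHull_eq,
    (isClosed_of_isCompact_weakTop hK).closure_eq]
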